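/- Let λ be a gl(m|n)-weight and define f(i) = Σ_{j∈I, j<i} (−1)^{|j|} for i∈I. If a + f(i) − (−1)^{|i|}λ_i is not a nonnegative integer for every i ∈ I, then the U(gl(m+1|n))-module F_a ⊗ L(λ) is a highest weight module, generated by the highest weight vector t_0^a ⊗ v_λ. -/

import Mathlib

set_option maxHeartbeats 1000000
set_option synthInstance.maxHeartbeats 400000

noncomputable section
open scoped TensorProduct

/-- The index set `I = {1,…,m,1̄,…,n̄}` of `gl(m|n)`; `Sum.inl` are the even
(unbarred) indices, `Sum.inr` the odd (barred) ones.  The index set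
`Î = {0} ∪ I` of `gl(m+1|n)` is realized as `Ind (m+1) n`, with `0 = Sum.inl 0`. -/
abbrev Ind (m n : ℕ) := Fin m ⊕ Fin n

/-- Parity of an index, as `0` or `1`. -/
def pI {m n : ℕ} : Ind m n → ℕ := Sum.elim (fun _ => 0) (fun _ => 1)

/-- The total order `1 < ⋯ < m < 1̄ < ⋯ < n̄` on `I` (and, with `m+1` in place of `m`,
the order `0 < 1 < ⋯ < m < 1̄ < ⋯ < n̄` on `Î`). -/
def iltI {m n : ℕ} : Ind m n → Ind m n → Prop
  | Sum.inl a, Sum.inl b => a < b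
  | Sum.inl _, Sum.inr _ => True
  | Sum.inr _, Sum.inl _ => False
  | Sum.inr a, Sum.inr b => a < b

/-- The distinguished index `0` of `Î`. -/
def z0 {m n : ℕ} : Ind (m+1) n := Sum.inl 0

/-- The inclusion `I ↪ Î`. -/
def emb {m n : ℕ} : Ind m n → Ind (m+1) n := Sum.map Fin.succ id

lemma emb_injective {m n : ℕ} : Function.Injective (emb (m := m) (n := n)) := by
  intro a b h
  cases a <;> cases b <;> simp [emb, Fin.succ_inj] at h <;> simp [h]

lemma emb_ne_z0 {m n : ℕ} (a : Ind m n) : emb a ≠ z0 := by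
  cases a <;> simp [emb, z0, Fin.succ_ne_zero]

/-- Builds a linear map out of a space with basis `α` from a function on basis vectors. -/
def mkOp {α M : Type} [AddCommGroup M] [Module ℂ M] (g : α → M) : (α →₀ ℂ) →ₗ[ℂ] M :=
  Finsupp.lsum ℂ fun x => LinearMap.toSpanSingleton ℂ M (g x)

/-- Number of odd variables occurring before position `i`. -/
def cntB {n : ℕ} (b : Fin n → Bool) (i : Fin n) : ℕ :=
  (Finset.univ.filter fun j => j < i ∧ b j = true).card

/-- Number of odd variables occurring. -/
def cntA {n : ℕ} (b : Fin n → Bool) : ℕ := (Finset.univ.filter fun j => b j = true).card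


/-- The defining (super-)commutation relations of `gl`:
`e_ij e_kl − (−1)^{(|i|+|j|)(|k|+|l|)} e_kl e_ij = δ_jk e_il − (−1)^{(|i|+|j|)(|k|+|l|)} δ_li e_kj`. -/
inductive glRel (ι : Type) (p : ι → ℕ) [DecidableEq ι] :
    FreeAlgebra ℂ (ι × ι) → FreeAlgebra ℂ (ι × ι) → Prop
  | basic (i j k l : ι) : glRel ι p
      (FreeAlgebra.ι ℂ (i, j) * FreeAlgebra.ι ℂ (k, l)
        - ((-1 : ℂ) ^ ((p i + p j) * (p k + p l))) •
            (FreeAlgebra.ι ℂ (k, l) * FreeAlgebra.ι ℂ (i, j)))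
      ((if j = k then FreeAlgebra.ι ℂ (i, l) else 0)
        - ((-1 : ℂ) ^ ((p i + p j) * (p k + p l))) •
            (if l = i then FreeAlgebra.ι ℂ (k, j) else 0))

/-- The universal enveloping superalgebra of the general linear Lie superalgebra with
index set `ι` and parity `p`, presented by generators `e_ij` and the super-commutator
relations. -/
abbrev UEA (ι : Type) (p : ι → ℕ) [DecidableEq ι] : Type := RingQuot (glRel ι p)

/-- The generator `e_ij` of `UEA ι p`. -/
def gen {ι : Type} (p : ι → ℕ) [DecidableEq ι] (i j : ι) : UEA ι p :=
  RingQuot.mkAlgHom ℂ (glRel ι p) (FreeAlgebra.ι ℂ (i, j))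

/-- Monomials of the `D'(m|n)`-module `F_a`: such a monomial
`t_0^{a−k_1−⋯−k_{n̄}} t_1^{k_1}⋯t_m^{k_m} t_{1̄}^{k_{1̄}}⋯t_{n̄}^{k_{n̄}}` is determined by the
exponents `(k_1,…,k_m,k_{1̄},…,k_{n̄})`. -/
abbrev FaMon (m n : ℕ) := (Fin m → ℕ) × (Fin n → Bool)

/-- The module `F_a`, as the vector space with basis its monomials. -/
abbrev FaSp (m n : ℕ) : Type := FaMon m n →₀ ℂ

/-- A basis monomial of `F_a`. -/
def amono {m n : ℕ} (x : FaMon m n) : FaSp m n := Finsupp.single x 1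

/-- The parity of a monomial of `F_a`. -/
def parM {m n : ℕ} (x : FaMon m n) : ℕ := cntA x.2

/-- The monomial `t_0^a` of `F_a`. -/
def hwMon (m n : ℕ) : FaMon m n := (fun _ => 0, fun _ => false)

/-- Multiplication by `t_i/t_0` on `F_a`, even `i`. -/
def aDivE {m n : ℕ} (i : Fin m) : Module.End ℂ (FaSp m n) :=
  mkOp fun x => amono (Function.update x.1 i (x.1 i + 1), x.2)

/-- Multiplication by `t_ī/t_0` on `F_a`, odd `ī`. -/
def aDivO {m n : ℕ} (i : Fin n) : Module.End ℂ (FaSp m n) :=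
  mkOp fun x => if x.2 i then 0 else
    ((-1 : ℂ) ^ (cntB x.2 i)) • amono (x.1, Function.update x.2 i true)

/-- The operator `t_0∂_0` on `F_a` (the exponent of `t_0` is `a` minus the total degree of the
other variables). -/
def aPar0 {m n : ℕ} (a : ℂ) : Module.End ℂ (FaSp m n) :=
  mkOp fun x => (a - (∑ i, (x.1 i : ℂ)) - (cntA x.2 : ℂ)) • amono x

/-- The operator `t_0∂_i` on `F_a`, even `i`. -/
def aParE {m n : ℕ} (i : Fin m) : Module.End ℂ (FaSp m n) :=
  mkOp fun x => (x.1 i : ℂ) • amono (Function.update x.1 i (x.1 i - 1), x.2)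

/-- The operator `t_0∂_ī` on `F_a`, odd `ī`. -/
def aParO {m n : ℕ} (i : Fin n) : Module.End ℂ (FaSp m n) :=
  mkOp fun x => if x.2 i then
    ((-1 : ℂ) ^ (cntB x.2 i)) • amono (x.1, Function.update x.2 i false) else 0

/-- `t_i/t_0` on `F_a` for `i ∈ I`. -/
def aDiv {m n : ℕ} : Ind m n → Module.End ℂ (FaSp m n) := Sum.elim aDivE aDivO

/-- `t_0∂_i` on `F_a` for `i ∈ Î`. -/
def aParB {m n : ℕ} (a : ℂ) : Ind (m+1) n → Module.End ℂ (FaSp m n) :=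
  Sum.elim (Fin.cases (aPar0 a) aParE) aParO

/-- `t_i/t_0` on `F_a` for `i ∈ Î`. -/
def aDivB {m n : ℕ} : Ind (m+1) n → Module.End ℂ (FaSp m n) :=
  Sum.elim (Fin.cases 1 aDivE) aDivO

/-- The operator `t_i∂_j` on `F_a`, `i, j ∈ Î`. -/
def aTD {m n : ℕ} (a : ℂ) (i j : Ind (m+1) n) : Module.End ℂ (FaSp m n) :=
  aDivB i * aParB a j

/-- The simple highest weight module `L(λ)` over `U(gl(m|n))`: a simple module with a
(nonzero) highest weight vector of weight `λ`. -/
structure SimpleHW (m n : ℕ) (lam : Ind m n → ℂ) where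
  L : Type
  [acg : AddCommGroup L]
  [mod : Module ℂ L]
  ρ : UEA (Ind m n) pI →ₐ[ℂ] Module.End ℂ L
  v : L
  v_ne : v ≠ 0
  hw : ∀ i j : Ind m n, iltI i j → ρ (gen pI i j) v = 0
  hwt : ∀ i : Ind m n, ρ (gen pI i i) v = lam i • v
  simple : ∀ N : Submodule ℂ L, (∀ u x, x ∈ N → ρ u x ∈ N) → N = ⊥ ∨ N = ⊤

attribute [instance] SimpleHW.acg SimpleHW.mod

/-- The Verma module `M(λ)` over `U(gl(m|n))`: a module generated by a highest weight vector
of weight `λ` which is universal among such. -/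
structure VermaM (m n : ℕ) (lam : Ind m n → ℂ) where
  L : Type
  [acg : AddCommGroup L]
  [mod : Module ℂ L]
  ρ : UEA (Ind m n) pI →ₐ[ℂ] Module.End ℂ L
  v : L
  v_ne : v ≠ 0
  hw : ∀ i j : Ind m n, iltI i j → ρ (gen pI i j) v = 0
  hwt : ∀ i : Ind m n, ρ (gen pI i i) v = lam i • v
  gens : ∀ N : Submodule ℂ L, (∀ u x, x ∈ N → ρ u x ∈ N) → v ∈ N → N = ⊤
  univ : ∀ (W : Type) [AddCommGroup W] [Module ℂ W]
      (ρW : UEA (Ind m n) pI →ₐ[ℂ] Module.End ℂ W) (w : W),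
      (∀ i j : Ind m n, iltI i j → ρW (gen pI i j) w = 0) →
      (∀ i : Ind m n, ρW (gen pI i i) w = lam i • w) →
      ∃ g : L →ₗ[ℂ] W, g v = w ∧ ∀ u x, g (ρ u x) = ρW u (g x)

attribute [instance] VermaM.acg VermaM.mod

/-- The predicate expressing that `Θ` is the representation of `U(gl(m+1|n))` on
`F_a ⊗ L` obtained via `φ_R` from a representation `ρ` of `U(gl(m|n))` on `L`, where the
central element `R` acts by the scalar `r`; the formulas for the action of the generators on
pure tensors (with the appropriate Koszul signs) are written out explicitly. -/
def IsTensorRep {m n : ℕ} (a r : ℂ) {L : Type} [AddCommGroup L] [Module ℂ L]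
    (ρ : UEA (Ind m n) pI →ₐ[ℂ] Module.End ℂ L)
    (Θ : UEA (Ind (m+1) n) pI →ₐ[ℂ] Module.End ℂ (FaSp m n ⊗[ℂ] L)) : Prop :=
  (∀ (c d : Ind m n) (x : FaMon m n) (v : L),
    Θ (gen pI (emb c) (emb d)) (amono x ⊗ₜ[ℂ] v) =
      (aTD a (emb c) (emb d)) (amono x) ⊗ₜ[ℂ] v
      + ((-1 : ℂ) ^ ((pI c + pI d) * parM x)) • (amono x ⊗ₜ[ℂ] (ρ (gen pI c d) v))
      + (if c = d then (((-1 : ℂ) ^ (pI c * pI d)) * r) • (amono x ⊗ₜ[ℂ] v) else 0)) ∧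
  (∀ (c : Ind m n) (x : FaMon m n) (v : L),
    Θ (gen pI (emb c) z0) (amono x ⊗ₜ[ℂ] v) =
      (aTD a (emb c) z0) (amono x) ⊗ₜ[ℂ] v
      - ∑ j : Ind m n, (((-1 : ℂ) ^ (pI c * pI j)) * ((-1 : ℂ) ^ ((pI c + pI j) * parM x))) •
          ((aDiv j (amono x)) ⊗ₜ[ℂ] (ρ (gen pI c j) v))) ∧
  (∀ (d : Ind m n) (x : FaMon m n) (v : L),
    Θ (gen pI z0 (emb d)) (amono x ⊗ₜ[ℂ] v) = (aTD a z0 (emb d)) (amono x) ⊗ₜ[ℂ] v) ∧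
  (∀ (x : FaMon m n) (v : L),
    Θ (gen pI z0 z0) (amono x ⊗ₜ[ℂ] v) =
      (aTD a z0 z0) (amono x) ⊗ₜ[ℂ] v + r • (amono x ⊗ₜ[ℂ] v))

/-- The shifted weight `λ̃ = (a+r, λ_1+r, …, λ_m+r, λ_{1̄}−r, …, λ_{n̄}−r)`. -/
def lamTilde {m n : ℕ} (a r : ℂ) (lam : Ind m n → ℂ) : Ind (m+1) n → ℂ :=
  Sum.elim (Fin.cases (a + r) fun k => lam (Sum.inl k) + r) fun k => lam (Sum.inr k) - r

/-- The Weyl vector `ρ_{m|n} = (m, m−1, …, 1, −1, −2, …, −n)`. -/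
def rhoS {m n : ℕ} : Ind m n → ℂ := Sum.elim (fun k => (m : ℂ) - k) fun k => -(k : ℂ) - 1

/-- Antidominance of a weight of `gl(m|n)`:
`⟨λ+ρ, α^∨⟩ ∉ ℤ_{>0}` for all positive even roots `α`. -/
def Antidom {m n : ℕ} (lam : Ind m n → ℂ) : Prop :=
  (∀ i j : Fin m, i < j → ¬∃ N : ℕ,
    (lam (Sum.inl i) + rhoS (m:=m) (n:=n) (Sum.inl i)) - (lam (Sum.inl j) + rhoS (m:=m) (n:=n) (Sum.inl j)) = (N : ℂ) + 1) ∧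
  (∀ i j : Fin n, i < j → ¬∃ N : ℕ,
    (lam (Sum.inr i) + rhoS (m:=m) (n:=n) (Sum.inr i)) - (lam (Sum.inr j) + rhoS (m:=m) (n:=n) (Sum.inr j)) = (N : ℂ) + 1)

/-- Typicality of a weight of `gl(m|n)`:
`(λ+ρ, α) ≠ 0` for all positive odd isotropic roots `α = δ_i − ε_j`. -/
def Typical {m n : ℕ} (lam : Ind m n → ℂ) : Prop :=
  ∀ (i : Fin m) (j : Fin n),
    (lam (Sum.inl i) + rhoS (m:=m) (n:=n) (Sum.inl i)) + (lam (Sum.inr j) + rhoS (m:=m) (n:=n) (Sum.inr j)) ≠ 0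

/-- `f(i) = Σ_{j<i} (−1)^{|j|}`. -/
def fshift {m n : ℕ} : Ind m n → ℂ := Sum.elim (fun k => (k : ℂ)) fun k => (m : ℂ) - (k : ℂ)

/-!
Let `N` be a submodule of `F_a ⊗ L` containing `t_0^a ⊗ v`, and let `F_k` be the homogeneous part of
`F_a` of degree `k` in the variables other than `t_0`. By induction on `k`, `F_k ⊗ L ⊆ N`. The
vectors `w` with `F_k ⊗ w ⊆ N` form a `gl(m|n)`-submodule of `L`, so it is enough to treat `w = v`.
By Euler's formula `F_{k+1}` is spanned by the `(t_i/t_0) g` with `g ∈ F_k`, and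
`(t_i/t_0) g ⊗ v ∈ N` follows by induction on `i`: if it holds for all `j < i`, applying `e_ij` to
`(t_j/t_0) g ⊗ v` evaluates the terms `j < i` of `e_i0 (g ⊗ v)` modulo `N`, the terms `j > i` vanish
since `v` is a highest weight vector, and in total
`0 ≡ e_i0 (g ⊗ v) ≡ (a + f(i) − (−1)^{|i|} λ_i − k) (t_i/t_0) g ⊗ v` modulo `N`, where the
coefficient is nonzero by hypothesis.
-/

section HighestWeight

/-- `N` is a submodule for the `A`-action `ρ` on `V`. -/
def IsSubrep {A V : Type*} [Semiring A] [Algebra ℂ A] [AddCommMonoid V] [Module ℂ V]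
    (ρ : A →ₐ[ℂ] Module.End ℂ V) (N : Submodule ℂ V) : Prop :=
  ∀ u, ∀ x ∈ N, ρ u x ∈ N

lemma isSubrep_of_gen {ι : Type} [DecidableEq ι] {p : ι → ℕ} {V : Type*}
    [AddCommMonoid V] [Module ℂ V] {ρ : UEA ι p →ₐ[ℂ] Module.End ℂ V} {N : Submodule ℂ V}
    (h : ∀ i j, ∀ x ∈ N, ρ (gen p i j) x ∈ N) : IsSubrep ρ N := by
  intro u
  obtain ⟨u, rfl⟩ := RingQuot.mkAlgHom_surjective ℂ (glRel ι p) u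
  induction u using FreeAlgebra.induction with
  | grade0 c =>
    intro x hx
    rw [AlgHom.commutes, AlgHom.commutes]
    exact N.smul_mem c hx
  | grade1 ij => exact h ij.1 ij.2
  | mul u w hu hw =>
    intro x hx
    rw [map_mul, map_mul]
    exact hu _ (hw _ hx)
  | add u w hu hw =>
    intro x hx
    rw [map_add, map_add]
    exact N.add_mem (hu _ hx) (hw _ hx)

/-- The module `V` over `U(gl(m|n))` is a highest weight module of highest weight `lam`, with
highest weight vector `v` generating it. -/
structure IsHighestWeight {m n : ℕ} {V : Type*} [AddCommMonoid V] [Module ℂ V]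
    (ρ : UEA (Ind m n) pI →ₐ[ℂ] Module.End ℂ V) (lam : Ind m n → ℂ) (v : V) : Prop where
  ne_zero : v ≠ 0
  raising : ∀ i j, iltI i j → ρ (gen pI i j) v = 0
  weight : ∀ i, ρ (gen pI i i) v = lam i • v
  eq_top_of_mem : ∀ N : Submodule ℂ V, IsSubrep ρ N → v ∈ N → N = ⊤

lemma SimpleHW.isHighestWeight {m n : ℕ} {lam : Ind m n → ℂ} (HW : SimpleHW m n lam) :
    IsHighestWeight HW.ρ lam HW.v where
  ne_zero := HW.v_ne
  raising := HW.hw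
  weight := HW.hwt
  eq_top_of_mem N hN hv := (HW.simple N hN).resolve_left fun h =>
    HW.v_ne <| (Submodule.mem_bot ℂ).1 <| h ▸ hv

end HighestWeight

section Index

variable {m n : ℕ}

lemma iltI_eq_sumLex : iltI (m := m) (n := n) = Sum.Lex (· < ·) (· < ·) := by
  ext (i | i) (j | j) <;> simp [iltI]

instance : DecidableRel (iltI (m := m) (n := n)) := fun i j =>
  decidable_of_iff (Sum.Lex (· < ·) (· < ·) i j) (by rw [iltI_eq_sumLex])

instance : IsWellOrder (Ind m n) iltI := by
  rw [iltI_eq_sumLex]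
  infer_instance

lemma eq_z0_or_emb (i : Ind (m + 1) n) : i = z0 ∨ ∃ c : Ind m n, i = emb c := by
  rcases i with i | i
  · rcases Fin.eq_zero_or_eq_succ i with rfl | ⟨c, rfl⟩
    · exact .inl rfl
    · exact .inr ⟨.inl c, rfl⟩
  · exact .inr ⟨.inr i, rfl⟩

lemma not_iltI_z0 : ∀ i : Ind (m + 1) n, ¬iltI i z0
  | .inl i => Fin.not_lt_zero i
  | .inr _ => id

lemma iltI_emb_emb {c d : Ind m n} : iltI (emb c) (emb d) ↔ iltI c d := by
  rcases c with c | c <;> rcases d with d | d <;> simp [iltI, emb]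

lemma fshift_eq_sum (i : Ind m n) :
    fshift i = ∑ j : Ind m n, if iltI j i then (-1 : ℂ) ^ pI j else 0 := by
  rcases i with i | i
  · simp [Fintype.sum_sum_type, iltI, pI, fshift, Finset.filter_gt_eq_Iio]
  · simp [Fintype.sum_sum_type, iltI, pI, fshift, Finset.sum_ite, Finset.filter_gt_eq_Iio,
      sub_eq_add_neg]

lemma lamTilde_emb (a r : ℂ) (lam : Ind m n → ℂ) (c : Ind m n) :
    lamTilde a r lam (emb c) = lam c + (-1 : ℂ) ^ (pI c * pI c) * r := by
  rcases c with c | c <;> simp [lamTilde, emb, pI, sub_eq_add_neg]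

end Index

section Monomial

variable {m n : ℕ}

/-- The total degree of a monomial of `F_a` in the variables other than `t_0`. -/
def FaMon.degree (x : FaMon m n) : ℕ := ∑ i, x.1 i + cntA x.2

lemma cntA_eq_sum (b : Fin n → Bool) : cntA b = ∑ i, (b i).toNat := by
  rw [cntA, Finset.card_filter]
  exact Finset.sum_congr rfl fun i _ => by cases b i <;> rfl

lemma sum_update_add_self {ι M : Type*} [Fintype ι] [DecidableEq ι] [AddCommMonoid M]
    (f : ι → M) (i : ι) (c : M) : ∑ j, Function.update f i c j + f i = ∑ j, f j + c := by
  rw [Finset.sum_update_of_mem (Finset.mem_univ i), Finset.sdiff_singleton_eq_erase,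
    ← Finset.add_sum_erase _ f (Finset.mem_univ i)]
  abel

lemma cntA_update_true {b : Fin n → Bool} {i : Fin n} (h : b i = false) :
    cntA (Function.update b i true) = cntA b + 1 := by
  have hsum := sum_update_add_self (fun j => (b j).toNat) i 1
  simp only [h, Bool.toNat_false, add_zero] at hsum
  rw [cntA_eq_sum, cntA_eq_sum, ← hsum]
  exact Finset.sum_congr rfl fun j _ => Function.apply_update (fun _ => Bool.toNat) b i true j

lemma cntA_update_false {b : Fin n → Bool} {i : Fin n} (h : b i = true) :
    cntA (Function.update b i false) + 1 = cntA b := by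
  rw [← cntA_update_true (Function.update_self i false b), Function.update_idem, ← h,
    Function.update_eq_self]

lemma cntB_update_self (b : Fin n → Bool) (i : Fin n) (c : Bool) :
    cntB (Function.update b i c) i = cntB b i := by
  unfold cntB
  congr 1
  ext j
  by_cases hj : j = i <;> simp [hj]

lemma cntB_update_true {b : Fin n → Bool} {i : Fin n} (h : b i = false) (j : Fin n) :
    cntB (Function.update b i true) j = cntB b j + if i < j then 1 else 0 := by
  have hfilter : (Finset.univ.filter fun k => k < j ∧ Function.update b i true k = true) =
      if i < j then insert i (Finset.univ.filter fun k => k < j ∧ b k = true)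
      else Finset.univ.filter fun k => k < j ∧ b k = true := by
    ext k
    by_cases hk : k = i <;> split_ifs <;> simp_all
  rw [cntB, cntB, hfilter]
  split_ifs
  · rw [Finset.card_insert_of_notMem (by simp [h])]
  · rfl

lemma FaMon.degree_update_add_one (x : FaMon m n) (i : Fin m) :
    FaMon.degree (Function.update x.1 i (x.1 i + 1), x.2) = x.degree + 1 := by
  have := sum_update_add_self x.1 i (x.1 i + 1)
  simp only [FaMon.degree]
  omega

lemma FaMon.degree_update_sub_one {x : FaMon m n} {i : Fin m} (h : x.1 i ≠ 0) :
    FaMon.degree (Function.update x.1 i (x.1 i - 1), x.2) + 1 = x.degree := by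
  have := sum_update_add_self x.1 i (x.1 i - 1)
  simp only [FaMon.degree]
  omega

lemma FaMon.degree_update_true {x : FaMon m n} {i : Fin n} (h : x.2 i = false) :
    FaMon.degree (x.1, Function.update x.2 i true) = x.degree + 1 := by
  rw [FaMon.degree, cntA_update_true h, FaMon.degree, add_assoc]

lemma FaMon.degree_update_false {x : FaMon m n} {i : Fin n} (h : x.2 i = true) :
    FaMon.degree (x.1, Function.update x.2 i false) + 1 = x.degree := by
  rw [FaMon.degree, add_assoc, cntA_update_false h, FaMon.degree]

lemma FaMon.degree_eq_zero_iff {x : FaMon m n} : x.degree = 0 ↔ x = hwMon m n := by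
  simp [FaMon.degree, cntA, hwMon, Finset.filter_eq_empty_iff, Prod.ext_iff, funext_iff]

end Monomial

section Operators

variable {m n : ℕ}

lemma mkOp_amono {M : Type} [AddCommGroup M] [Module ℂ M] (g : FaMon m n → M) (x : FaMon m n) :
    mkOp g (amono x) = g x := by
  simp [mkOp, amono]

lemma linearMap_ext_amono {M : Type*} [AddCommMonoid M] [Module ℂ M] {S T : FaSp m n →ₗ[ℂ] M}
    (h : ∀ x, S (amono x) = T (amono x)) : S = T :=
  Finsupp.lhom_ext' fun x => LinearMap.ext_ring (h x)

lemma linearMap_ext_amono_tmul {L M : Type*} [AddCommMonoid L] [Module ℂ L] [AddCommMonoid M]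
    [Module ℂ M] {S T : FaSp m n ⊗[ℂ] L →ₗ[ℂ] M}
    (h : ∀ x w, S (amono x ⊗ₜ w) = T (amono x ⊗ₜ w)) : S = T :=
  TensorProduct.ext <| linearMap_ext_amono fun x => LinearMap.ext (h x)

lemma span_amono : Submodule.span ℂ (Set.range (amono (m := m) (n := n))) = ⊤ :=
  Finsupp.basisSingleOne.span_eq

/-- The operator `t_0∂_i` on `F_a` for `i ∈ I`, which does not depend on `a`. -/
def aPar : Ind m n → Module.End ℂ (FaSp m n) := Sum.elim aParE aParO

/-- The Euler operator `Σ_{i∈I} t_i∂_i`, which multiplies a monomial by its degree in the variables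
other than `t_0`. -/
def eulerOp : Module.End ℂ (FaSp m n) := mkOp fun x => (x.degree : ℂ) • amono x

/-- The parity involution, which carries the Koszul signs of operators on `F_a ⊗ L`. -/
def parityOp : Module.End ℂ (FaSp m n) := mkOp fun x => (-1 : ℂ) ^ parM x • amono x

lemma eulerOp_amono (x : FaMon m n) : eulerOp (amono x) = (x.degree : ℂ) • amono x :=
  mkOp_amono _ x

lemma eulerOp_apply (f : FaSp m n) (x : FaMon m n) : eulerOp f x = (x.degree : ℂ) * f x := by
  refine LinearMap.congr_fun (f := Finsupp.lapply x ∘ₗ eulerOp)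
    (g := (x.degree : ℂ) • Finsupp.lapply x) (linearMap_ext_amono fun y => ?_) f
  rcases eq_or_ne y x with rfl | hyx <;>
    rw [LinearMap.comp_apply, eulerOp_amono] <;> simp [amono, *]

lemma parityOp_amono (x : FaMon m n) : parityOp (amono x) = (-1 : ℂ) ^ parM x • amono x :=
  mkOp_amono _ x

lemma aDiv_inl_amono (i : Fin m) (x : FaMon m n) :
    aDiv (.inl i) (amono x) = amono (Function.update x.1 i (x.1 i + 1), x.2) :=
  mkOp_amono _ x

lemma aDiv_inr_amono (i : Fin n) (x : FaMon m n) :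
    aDiv (.inr i) (amono x) = if x.2 i then 0 else
      (-1 : ℂ) ^ cntB x.2 i • amono (x.1, Function.update x.2 i true) :=
  mkOp_amono _ x

lemma aPar_inl_amono (i : Fin m) (x : FaMon m n) :
    aPar (.inl i) (amono x) = (x.1 i : ℂ) • amono (Function.update x.1 i (x.1 i - 1), x.2) :=
  mkOp_amono _ x

lemma aPar_inr_amono (i : Fin n) (x : FaMon m n) :
    aPar (.inr i) (amono x) = if x.2 i then
      (-1 : ℂ) ^ cntB x.2 i • amono (x.1, Function.update x.2 i false) else 0 :=
  mkOp_amono _ x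

lemma aPar_amono_hwMon (i : Ind m n) : aPar i (amono (hwMon m n)) = 0 := by
  rcases i with i | i <;> simp [aPar_inl_amono, aPar_inr_amono, hwMon]

lemma aPar0_eq (a : ℂ) : aPar0 a = a • 1 - eulerOp (m := m) (n := n) := by
  refine linearMap_ext_amono fun x => (mkOp_amono _ x).trans ?_
  simp [eulerOp_amono, FaMon.degree, ← sub_smul, sub_sub]

lemma aTD_emb_emb (a : ℂ) (c d : Ind m n) : aTD a (emb c) (emb d) = aDiv c * aPar d := by
  rcases c with c | c <;> rcases d with d | d <;> rfl

lemma aTD_emb_z0 (a : ℂ) (c : Ind m n) : aTD a (emb c) z0 = aDiv c * (a • 1 - eulerOp) := by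
  rw [← aPar0_eq]
  rcases c with c | c <;> rfl

lemma aTD_z0_emb (a : ℂ) (d : Ind m n) : aTD a z0 (emb d) = aPar d := by
  rcases d with d | d <;> rfl

lemma aTD_z0_z0 (a : ℂ) : aTD a z0 z0 = a • 1 - eulerOp (m := m) (n := n) := by
  rw [← aPar0_eq]
  rfl

lemma aDiv_mul_aDiv (i j : Ind m n) :
    aDiv i * aDiv j = (-1 : ℂ) ^ (pI i * pI j) • (aDiv j * aDiv i) := by
  refine linearMap_ext_amono fun x => ?_
  rcases i with i | i <;> rcases j with j | j
  · rcases eq_or_ne i j with rfl | hij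
    · simp [pI]
    · simp [pI, aDiv_inl_amono, hij, hij.symm, Function.update_comm hij]
  · cases h : x.2 j <;> simp [pI, aDiv_inl_amono, aDiv_inr_amono, h]
  · cases h : x.2 i <;> simp [pI, aDiv_inl_amono, aDiv_inr_amono, h]
  · rcases lt_trichotomy i j with hij | rfl | hij
    · cases hi : x.2 i <;> cases hj : x.2 j <;>
        simp [pI, aDiv_inr_amono, hi, hj, hij, hij.ne, hij.ne', hij.not_gt, cntB_update_true,
          pow_succ, smul_smul, Function.update_comm hij.ne, mul_comm]
    · simp [pI, aDiv_inr_amono, apply_ite]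
    · cases hi : x.2 i <;> cases hj : x.2 j <;>
        simp [pI, aDiv_inr_amono, hi, hj, hij, hij.ne, hij.ne', hij.not_gt, cntB_update_true,
          pow_succ, smul_smul, Function.update_comm hij.ne, mul_comm]

lemma aDiv_mul_aPar_inl_amono (i : Fin m) (x : FaMon m n) :
    aDiv (.inl i) (aPar (.inl i) (amono x)) = (x.1 i : ℂ) • amono x := by
  rcases eq_or_ne (x.1 i) 0 with h | h
  · simp [aPar_inl_amono, h]
  · simp [aPar_inl_amono, aDiv_inl_amono, Nat.sub_one_add_one h]

lemma aDiv_mul_aPar_inr_amono (i : Fin n) (x : FaMon m n) :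
    aDiv (.inr i) (aPar (.inr i) (amono x)) = ((x.2 i).toNat : ℂ) • amono x := by
  cases h : x.2 i
  · simp [aPar_inr_amono, h]
  · simp [aPar_inr_amono, aDiv_inr_amono, h, cntB_update_self, smul_smul, ← mul_pow,
      Function.update_eq_self_iff (f := x.2).2 h.symm]

lemma aPar_mul_aDiv (i : Ind m n) :
    aPar i * aDiv i = 1 + (-1 : ℂ) ^ pI i • (aDiv i * aPar i) := by
  refine linearMap_ext_amono fun x => ?_
  rcases i with i | i
  · rw [LinearMap.add_apply, LinearMap.smul_apply, Module.End.mul_apply, Module.End.mul_apply,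
      aDiv_mul_aPar_inl_amono]
    simp [aDiv_inl_amono, aPar_inl_amono, pI, add_smul, add_comm]
  · cases h : x.2 i
    · simp [aDiv_inr_amono, aPar_inr_amono, pI, h, cntB_update_self,
        smul_smul, ← mul_pow, Function.update_eq_self_iff (f := x.2).2 h.symm]
    · simp [aDiv_mul_aPar_inr_amono, aDiv_inr_amono, pI, h]

lemma sum_aDiv_mul_aPar : ∑ i : Ind m n, aDiv i * aPar i = eulerOp := by
  refine linearMap_ext_amono fun x => ?_
  simp [eulerOp_amono, FaMon.degree, cntA_eq_sum, Fintype.sum_sum_type,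
    aDiv_mul_aPar_inl_amono, aDiv_mul_aPar_inr_amono, add_smul, Finset.sum_smul]

lemma eulerOp_mul_aDiv (i : Ind m n) : eulerOp * aDiv i = aDiv i * eulerOp + aDiv i := by
  refine linearMap_ext_amono fun x => ?_
  rcases i with i | i
  · simp [eulerOp_amono, aDiv_inl_amono, FaMon.degree_update_add_one, add_smul]
  · cases h : x.2 i
    · simp [eulerOp_amono, aDiv_inr_amono, h, FaMon.degree_update_true, add_smul,
        smul_comm (x.degree : ℂ)]
    · simp [eulerOp_amono, aDiv_inr_amono, h]

lemma aPar_mul_eulerOp (i : Ind m n) : aPar i * eulerOp = eulerOp * aPar i + aPar i := by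
  refine linearMap_ext_amono fun x => ?_
  rcases i with i | i
  · rcases eq_or_ne (x.1 i) 0 with h | h
    · simp [eulerOp_amono, aPar_inl_amono, h]
    · simp [eulerOp_amono, aPar_inl_amono, ← FaMon.degree_update_sub_one h, add_smul,
        smul_comm (x.1 i : ℂ)]
  · cases h : x.2 i
    · simp [eulerOp_amono, aPar_inr_amono, h]
    · simp [eulerOp_amono, aPar_inr_amono, h, ← FaMon.degree_update_false h, add_smul,
        smul_comm ((-1 : ℂ) ^ cntB x.2 i)]

lemma semiconjBy_aDiv_parityOp (i : Ind m n) :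
    SemiconjBy (aDiv i) ((-1 : ℂ) ^ pI i • parityOp) parityOp := by
  refine linearMap_ext_amono fun x => ?_
  rcases i with i | i
  · simp [parityOp_amono, aDiv_inl_amono, parM, pI]
  · cases h : x.2 i
    · simp [parityOp_amono, aDiv_inr_amono, h, parM, pI, cntA_update_true, pow_succ, smul_smul,
        mul_comm]
    · simp [parityOp_amono, aDiv_inr_amono, h]

lemma parityOp_pow_amono (e : ℕ) (x : FaMon m n) :
    (parityOp ^ e) (amono x) = (-1 : ℂ) ^ (e * parM x) • amono x := by
  induction e with
  | zero => simp
  | succ e ih =>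
    rw [pow_succ', Module.End.mul_apply, ih, map_smul, parityOp_amono, smul_smul, ← pow_add,
      Nat.succ_mul]

lemma parityOp_pow_amono_hwMon (e : ℕ) :
    (parityOp ^ e) (amono (hwMon m n)) = amono (hwMon m n) := by
  simp [parityOp_pow_amono, parM, cntA, hwMon]

lemma parityOp_pow_mul_self (e : ℕ) :
    parityOp ^ e * parityOp ^ e = (1 : Module.End ℂ (FaSp m n)) :=
  linearMap_ext_amono fun x => by simp [parityOp_pow_amono, smul_smul, ← mul_pow]

lemma commute_eulerOp_parityOp : Commute (eulerOp (m := m) (n := n)) parityOp :=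
  linearMap_ext_amono fun x => by
    simp [parityOp_amono, eulerOp_amono, smul_comm (x.degree : ℂ)]

end Operators

section Homogeneous

variable {m n : ℕ}

/-- The homogeneous component of `F_a` of degree `k` in the variables other than `t_0`, as an
eigenspace of the Euler operator. -/
def homog (m n k : ℕ) : Submodule ℂ (FaSp m n) := Module.End.eigenspace eulerOp (k : ℂ)

lemma mem_homog {k : ℕ} {f : FaSp m n} : f ∈ homog m n k ↔ eulerOp f = (k : ℂ) • f :=
  Module.End.mem_eigenspace_iff

lemma amono_mem_homog (x : FaMon m n) : amono x ∈ homog m n x.degree :=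
  mem_homog.2 (eulerOp_amono x)

lemma aPar_mem_homog {k : ℕ} {f : FaSp m n} (hf : f ∈ homog m n (k + 1)) (i : Ind m n) :
    aPar i f ∈ homog m n k := by
  have h := LinearMap.congr_fun (aPar_mul_eulerOp i) f
  simp only [Module.End.mul_apply, LinearMap.add_apply, mem_homog.1 hf, map_smul, map_add,
    Nat.cast_succ, add_smul, one_smul] at h
  exact mem_homog.2 (add_right_cancel h).symm

lemma aDiv_aPar_mem_homog {k : ℕ} {f : FaSp m n} (hf : f ∈ homog m n k) (i j : Ind m n) :
    aDiv i (aPar j f) ∈ homog m n k := by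
  have hdiv := LinearMap.congr_fun (eulerOp_mul_aDiv i) (aPar j f)
  have hpar := LinearMap.congr_fun (aPar_mul_eulerOp j) f
  simp only [Module.End.mul_apply, LinearMap.add_apply, mem_homog.1 hf, map_smul] at hdiv hpar
  rw [mem_homog, hdiv, ← map_add, ← hpar, map_smul]

lemma parityOp_pow_mem_homog {k : ℕ} {f : FaSp m n} (hf : f ∈ homog m n k) (e : ℕ) :
    (parityOp ^ e) f ∈ homog m n k := by
  have h := LinearMap.congr_fun ((commute_eulerOp_parityOp (m := m) (n := n)).pow_right e) f
  rw [Module.End.mul_apply, Module.End.mul_apply, mem_homog.1 hf, map_smul] at h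
  exact mem_homog.2 h

lemma parityOp_pow_parityOp_pow (e : ℕ) (f : FaSp m n) :
    (parityOp ^ e) ((parityOp ^ e) f) = f := by
  rw [← Module.End.mul_apply, parityOp_pow_mul_self, Module.End.one_apply]

lemma parityOp_pow_aDiv (e : ℕ) (i : Ind m n) (f : FaSp m n) :
    (parityOp ^ e) (aDiv i f) = (-1 : ℂ) ^ (pI i * e) • aDiv i ((parityOp ^ e) f) := by
  have h : aDiv i ((((-1 : ℂ) ^ pI i • parityOp) ^ e) f) = (parityOp ^ e) (aDiv i f) :=
    LinearMap.congr_fun ((semiconjBy_aDiv_parityOp i).pow_right e) f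
  rw [← h, smul_pow, ← pow_mul, LinearMap.smul_apply, map_smul]

lemma aDiv_aPar_aDiv (i j : Ind m n) (f : FaSp m n) :
    aDiv i (aPar j (aDiv j f)) =
      aDiv i f + ((-1 : ℂ) ^ pI j * (-1) ^ (pI i * pI j)) • aDiv j (aDiv i (aPar j f)) := by
  have hpar : aPar j (aDiv j f) = f + (-1 : ℂ) ^ pI j • aDiv j (aPar j f) :=
    LinearMap.congr_fun (aPar_mul_aDiv j) f
  have hdiv : aDiv i (aDiv j (aPar j f)) = (-1 : ℂ) ^ (pI i * pI j) • aDiv j (aDiv i (aPar j f)) :=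
    LinearMap.congr_fun (aDiv_mul_aDiv i j) (aPar j f)
  rw [hpar, map_add, map_smul, hdiv, smul_smul]

lemma homog_zero : homog m n 0 = ℂ ∙ amono (hwMon m n) := by
  refine le_antisymm (fun f hf => ?_) ?_
  · have hzero : ∀ x ≠ hwMon m n, f x = 0 := fun x hx => by
      have hdeg : (x.degree : ℂ) * f x = 0 := by
        rw [← eulerOp_apply, mem_homog.1 hf, Nat.cast_zero, zero_smul, Finsupp.zero_apply]
      exact (mul_eq_zero.1 hdeg).resolve_left
        (Nat.cast_ne_zero.2 (mt FaMon.degree_eq_zero_iff.1 hx))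
    refine Submodule.mem_span_singleton.2 ⟨f (hwMon m n), ?_⟩
    ext x
    rcases eq_or_ne (hwMon m n) x with rfl | hx
    · simp [amono]
    · simp [amono, hx, hzero x hx.symm]
  · rw [Submodule.span_singleton_le_iff_mem, ← FaMon.degree_eq_zero_iff.2 rfl]
    exact amono_mem_homog _

lemma homog_succ_le_iSup (k : ℕ) :
    homog m n (k + 1) ≤ ⨆ i : Ind m n, (homog m n k).map (aDiv i) := by
  intro f hf
  have heuler : ∑ i, aDiv i (aPar i f) = ((k + 1 : ℕ) : ℂ) • f := by
    rw [← mem_homog.1 hf, ← sum_aDiv_mul_aPar, LinearMap.sum_apply]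
    rfl
  rw [← Submodule.smul_mem_iff _ (Nat.cast_ne_zero.2 k.succ_ne_zero : ((k + 1 : ℕ) : ℂ) ≠ 0),
    ← heuler]
  exact Submodule.sum_mem _ fun i _ =>
    Submodule.mem_iSup_of_mem i (Submodule.mem_map_of_mem (aPar_mem_homog hf i))

lemma iSup_homog : ⨆ k, homog m n k = ⊤ := by
  rw [eq_top_iff, ← span_amono, Submodule.span_le]
  rintro _ ⟨x, rfl⟩
  exact Submodule.mem_iSup_of_mem x.degree (amono_mem_homog x)

end Homogeneous

section TensorRep

variable {m n : ℕ} {a r : ℂ} {L : Type} [AddCommGroup L] [Module ℂ L]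
  {ρ : UEA (Ind m n) pI →ₐ[ℂ] Module.End ℂ L}
  {Θ : UEA (Ind (m + 1) n) pI →ₐ[ℂ] Module.End ℂ (FaSp m n ⊗[ℂ] L)}

-- Without this shortcut, lemmas on additive groups do not unify with the additive structure of
-- `F_a ⊗ L`.
local instance : AddCommGroup (FaSp m n ⊗[ℂ] L) := TensorProduct.addCommGroup

lemma IsTensorRep.emb_emb (hΘ : IsTensorRep a r ρ Θ) (c d : Ind m n) :
    Θ (gen pI (emb c) (emb d)) =
      TensorProduct.map (aDiv c * aPar d) 1 +
        TensorProduct.map (parityOp ^ (pI c + pI d)) (ρ (gen pI c d)) +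
        (if c = d then (-1 : ℂ) ^ (pI c * pI d) * r else 0) • 1 := by
  refine linearMap_ext_amono_tmul fun x w => ?_
  simp only [hΘ.1, aTD_emb_emb, LinearMap.add_apply, TensorProduct.map_tmul, parityOp_pow_amono,
    TensorProduct.smul_tmul', ite_smul, zero_smul, Module.End.one_apply]
  split_ifs <;> rfl

lemma IsTensorRep.emb_z0 (hΘ : IsTensorRep a r ρ Θ) (c : Ind m n) :
    Θ (gen pI (emb c) z0) =
      TensorProduct.map (aDiv c * (a • 1 - eulerOp)) (1 : Module.End ℂ L) -
        ∑ j, (-1 : ℂ) ^ (pI c * pI j) •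
          TensorProduct.map (aDiv j * parityOp ^ (pI c + pI j)) (ρ (gen pI c j)) := by
  refine linearMap_ext_amono_tmul fun x w => ?_
  simp [hΘ.2.1, aTD_emb_z0, parityOp_pow_amono, TensorProduct.smul_tmul', LinearMap.sum_apply,
    smul_smul]

lemma IsTensorRep.z0_emb (hΘ : IsTensorRep a r ρ Θ) (d : Ind m n) :
    Θ (gen pI z0 (emb d)) = TensorProduct.map (aPar d) 1 :=
  linearMap_ext_amono_tmul fun x w => by simp [hΘ.2.2.1, aTD_z0_emb]

lemma IsTensorRep.z0_z0 (hΘ : IsTensorRep a r ρ Θ) :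
    Θ (gen pI z0 z0) = TensorProduct.map (a • 1 - eulerOp) 1 + r • 1 :=
  linearMap_ext_amono_tmul fun x w => by simp [hΘ.2.2.2, aTD_z0_z0]

lemma IsTensorRep.emb_emb_hwMon_tmul (hΘ : IsTensorRep a r ρ Θ) (c d : Ind m n) (w : L) :
    Θ (gen pI (emb c) (emb d)) (amono (hwMon m n) ⊗ₜ w) =
      amono (hwMon m n) ⊗ₜ ρ (gen pI c d) w +
        (if c = d then (-1 : ℂ) ^ (pI c * pI d) * r else 0) • amono (hwMon m n) ⊗ₜ w := by
  simp [hΘ.emb_emb, aPar_amono_hwMon, parityOp_pow_amono_hwMon, -ite_smul]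

lemma amono_tmul_ne_zero (x : FaMon m n) {w : L} (hw : w ≠ 0) : amono x ⊗ₜ[ℂ] w ≠ 0 := fun h =>
  hw <| by simpa [amono] using
    congrArg (TensorProduct.lid ℂ L ∘ LinearMap.rTensor L (Finsupp.lapply x)) h

variable {lam : Ind m n → ℂ} {v : L}

lemma IsTensorRep.raising_hwMon_tmul (hΘ : IsTensorRep a r ρ Θ) (hv : IsHighestWeight ρ lam v)
    {i j : Ind (m + 1) n} (hij : iltI i j) :
    Θ (gen pI i j) (amono (hwMon m n) ⊗ₜ v) = 0 := by
  obtain rfl | ⟨d, rfl⟩ := eq_z0_or_emb j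
  · exact absurd hij (not_iltI_z0 i)
  obtain rfl | ⟨c, rfl⟩ := eq_z0_or_emb i
  · simp [hΘ.z0_emb, aPar_amono_hwMon]
  · have hcd : iltI c d := iltI_emb_emb.1 hij
    rw [hΘ.emb_emb_hwMon_tmul, hv.raising c d hcd, if_neg (ne_of_irrefl hcd)]
    simp

lemma IsTensorRep.weight_hwMon_tmul (hΘ : IsTensorRep a r ρ Θ) (hv : IsHighestWeight ρ lam v)
    (i : Ind (m + 1) n) :
    Θ (gen pI i i) (amono (hwMon m n) ⊗ₜ v) =
      lamTilde a r lam i • amono (hwMon m n) ⊗ₜ v := by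
  obtain rfl | ⟨c, rfl⟩ := eq_z0_or_emb i
  · have hlam : lamTilde a r lam z0 = a + r := rfl
    rw [hΘ.z0_z0, hlam]
    simp [eulerOp_amono, FaMon.degree_eq_zero_iff.2, TensorProduct.smul_tmul', add_smul]
  · rw [hΘ.emb_emb_hwMon_tmul, hv.weight, if_pos rfl, lamTilde_emb, add_smul,
      TensorProduct.tmul_smul]

/-- The vectors `w` with `F ⊗ w ⊆ N`, for a subspace `F` of `F_a`. -/
def tmulTransporter (N : Submodule ℂ (FaSp m n ⊗[ℂ] L)) (F : Submodule ℂ (FaSp m n)) :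
    Submodule ℂ L :=
  ⨅ f ∈ F, N.comap (TensorProduct.mk ℂ _ L f)

variable {N : Submodule ℂ (FaSp m n ⊗[ℂ] L)} {k : ℕ}

lemma mem_tmulTransporter {F : Submodule ℂ (FaSp m n)} {w : L} :
    w ∈ tmulTransporter N F ↔ ∀ f ∈ F, f ⊗ₜ w ∈ N := by
  simp [tmulTransporter]

lemma IsTensorRep.isSubrep_tmulTransporter_homog (hΘ : IsTensorRep a r ρ Θ) (hN : IsSubrep Θ N)
    (k : ℕ) : IsSubrep ρ (tmulTransporter N (homog m n k)) := by
  refine isSubrep_of_gen fun c d w hw => mem_tmulTransporter.2 fun f hf => ?_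
  rw [mem_tmulTransporter] at hw
  have hσf := parityOp_pow_mem_homog hf (pI c + pI d)
  have haction := hN (gen pI (emb c) (emb d)) _ (hw _ hσf)
  simp only [hΘ.emb_emb, LinearMap.add_apply, LinearMap.smul_apply, TensorProduct.map_tmul,
    Module.End.mul_apply, Module.End.one_apply, parityOp_pow_parityOp_pow] at haction
  exact (N.add_mem_iff_right (hw _ (aDiv_aPar_mem_homog hσf c d))).1 <|
    (N.add_mem_iff_left (N.smul_mem _ (hw _ hσf))).1 haction

lemma IsTensorRep.smodEq_of_aDiv_tmul_mem (hΘ : IsTensorRep a r ρ Θ) (hN : IsSubrep Θ N)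
    {i j : Ind m n} (hij : i ≠ j) {w : L} (hw : ∀ f ∈ homog m n k, aDiv j f ⊗ₜ w ∈ N)
    {f : FaSp m n} (hf : f ∈ homog m n k) :
    (-1 : ℂ) ^ (pI i * pI j) • aDiv j ((parityOp ^ (pI i + pI j)) f) ⊗ₜ ρ (gen pI i j) w ≡
      -(-1 : ℂ) ^ pI j • aDiv i f ⊗ₜ w [SMOD N] := by
  have haction : aDiv i f ⊗ₜ w +
      ((-1 : ℂ) ^ pI j * (-1) ^ (pI i * pI j)) • aDiv j (aDiv i (aPar j f)) ⊗ₜ w +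
      (-1 : ℂ) ^ (pI j * (pI i + pI j)) •
        aDiv j ((parityOp ^ (pI i + pI j)) f) ⊗ₜ ρ (gen pI i j) w ∈ N := by
    simpa only [hΘ.emb_emb, hij, LinearMap.add_apply, TensorProduct.map_tmul,
      Module.End.mul_apply, Module.End.one_apply, parityOp_pow_aDiv, aDiv_aPar_aDiv,
      TensorProduct.add_tmul, if_false, zero_smul, add_zero, ← TensorProduct.smul_tmul']
      using hN (gen pI (emb i) (emb j)) _ (hw f hf)
  have hlower := N.smul_mem ((-1 : ℂ) ^ pI j * (-1) ^ (pI i * pI j))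
    (hw _ (aDiv_aPar_mem_homog hf i j))
  have hsign : (-1 : ℂ) ^ (pI i * pI j) = (-1) ^ pI j * (-1) ^ (pI j * (pI i + pI j)) := by
    rcases j with j | j <;> simp [pI, pow_succ]
  rw [SModEq.sub_mem, hsign, mul_smul, neg_smul, sub_neg_eq_add, ← smul_add]
  refine N.smul_mem _ ((N.add_mem_iff_left hlower).1 ?_)
  convert haction using 1
  abel

lemma IsTensorRep.emb_z0_tmul (hΘ : IsTensorRep a r ρ Θ) {f : FaSp m n} (hf : f ∈ homog m n k)
    (i : Ind m n) (w : L) :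
    Θ (gen pI (emb i) z0) (f ⊗ₜ w) = (a - k) • aDiv i f ⊗ₜ w -
      ∑ j, (-1 : ℂ) ^ (pI i * pI j) •
        aDiv j ((parityOp ^ (pI i + pI j)) f) ⊗ₜ ρ (gen pI i j) w := by
  simp [hΘ.emb_z0, mem_homog.1 hf, LinearMap.sum_apply, ← sub_smul, TensorProduct.smul_tmul']

lemma IsTensorRep.smodEq_smul_aDiv_tmul (hΘ : IsTensorRep a r ρ Θ) (hN : IsSubrep Θ N)
    (hv : IsHighestWeight ρ lam v) {i : Ind m n}
    (hlt : ∀ j, iltI j i → ∀ f ∈ homog m n k, aDiv j f ⊗ₜ v ∈ N)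
    {f : FaSp m n} (hf : f ∈ homog m n k) (j : Ind m n) :
    (-1 : ℂ) ^ (pI i * pI j) • aDiv j ((parityOp ^ (pI i + pI j)) f) ⊗ₜ ρ (gen pI i j) v ≡
      ((if j = i then (-1 : ℂ) ^ pI i * lam i else 0) - if iltI j i then (-1 : ℂ) ^ pI j else 0) •
        aDiv i f ⊗ₜ v [SMOD N] := by
  rcases trichotomous_of iltI j i with hji | rfl | hij
  · rw [if_neg (ne_of_irrefl hji), if_pos hji, zero_sub]
    exact hΘ.smodEq_of_aDiv_tmul_mem hN (ne_of_irrefl hji).symm (hlt j hji) hf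
  · have hsign : (-1 : ℂ) ^ (pI j * pI j) = (-1) ^ pI j := by
      rcases j with j | j <;> simp [pI]
    rw [if_pos rfl, if_neg (irrefl j), sub_zero, pow_add, parityOp_pow_mul_self, hv.weight,
      TensorProduct.tmul_smul, smul_smul, hsign, Module.End.one_apply]
  · rw [hv.raising i j hij, if_neg (ne_of_irrefl hij).symm, if_neg (asymm hij)]
    simp only [TensorProduct.tmul_zero, smul_zero, sub_self, zero_smul]
    rfl

lemma IsTensorRep.aDiv_tmul_mem (hΘ : IsTensorRep a r ρ Θ) (hN : IsSubrep Θ N)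
    (hv : IsHighestWeight ρ lam v) (hcond : ∀ i, a + fshift i - (-1 : ℂ) ^ pI i * lam i ≠ k)
    (hk : v ∈ tmulTransporter N (homog m n k)) (i : Ind m n) :
    ∀ f ∈ homog m n k, aDiv i f ⊗ₜ v ∈ N := by
  induction i using IsWellFounded.induction iltI with
  | _ i hlt =>
    intro f hf
    have haction := hN (gen pI (emb i) z0) _ (mem_tmulTransporter.1 hk f hf)
    have hsum := SModEq.sum fun j (_ : j ∈ Finset.univ) => hΘ.smodEq_smul_aDiv_tmul hN hv hlt hf j
    rw [← Finset.sum_smul, Finset.sum_sub_distrib, Finset.sum_ite_eq' Finset.univ i,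
      if_pos (Finset.mem_univ i), ← fshift_eq_sum] at hsum
    rw [hΘ.emb_z0_tmul hf, ← SModEq.zero] at haction
    have hscalar : (a - k - ((-1) ^ pI i * lam i - fshift i)) • aDiv i f ⊗ₜ v ∈ N := by
      rw [sub_smul, ← SModEq.zero]
      exact (SModEq.rfl.sub hsum).symm.trans haction
    refine (N.smul_mem_iff fun h => hcond i ?_).1 hscalar
    linear_combination h

lemma IsTensorRep.tmulTransporter_homog_eq_top (hΘ : IsTensorRep a r ρ Θ) (hN : IsSubrep Θ N)
    (hv : IsHighestWeight ρ lam v)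
    (hcond : ∀ i, ∀ k : ℕ, a + fshift i - (-1 : ℂ) ^ pI i * lam i ≠ k)
    (hvac : amono (hwMon m n) ⊗ₜ v ∈ N) (k : ℕ) : tmulTransporter N (homog m n k) = ⊤ := by
  refine hv.eq_top_of_mem _ (hΘ.isSubrep_tmulTransporter_homog hN k) ?_
  induction k with
  | zero =>
    refine mem_tmulTransporter.2 fun f hf => ?_
    rw [homog_zero] at hf
    obtain ⟨c, rfl⟩ := Submodule.mem_span_singleton.1 hf
    exact N.smul_mem c hvac
  | succ k hk =>
    have hle : homog m n (k + 1) ≤ N.comap ((TensorProduct.mk ℂ _ L).flip v) :=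
      (homog_succ_le_iSup k).trans <| iSup_le fun i => Submodule.map_le_iff_le_comap.2 fun f hf =>
        hΘ.aDiv_tmul_mem hN hv (hcond · k) hk i f hf
    exact mem_tmulTransporter.2 fun f hf => hle hf

lemma eq_top_of_tmulTransporter_homog_eq_top (h : ∀ k, tmulTransporter N (homog m n k) = ⊤) :
    N = ⊤ := by
  refine eq_top_iff.2 fun x _ => ?_
  induction x with
  | zero => exact N.zero_mem
  | add x y hx hy => exact N.add_mem (hx trivial) (hy trivial)
  | tmul f w =>
    have hle : ⨆ k, homog m n k ≤ N.comap ((TensorProduct.mk ℂ _ L).flip w) := iSup_le fun k f hf =>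
      mem_tmulTransporter.1 (h k ▸ Submodule.mem_top) f hf
    exact hle (iSup_homog ▸ Submodule.mem_top)

end TensorRep

theorem stmt6_general {m n : ℕ} {a r : ℂ} {L : Type} [AddCommGroup L] [Module ℂ L]
    {ρ : UEA (Ind m n) pI →ₐ[ℂ] Module.End ℂ L} {lam : Ind m n → ℂ} {v : L}
    (hv : IsHighestWeight ρ lam v)
    {Θ : UEA (Ind (m + 1) n) pI →ₐ[ℂ] Module.End ℂ (FaSp m n ⊗[ℂ] L)}
    (hΘ : IsTensorRep a r ρ Θ)
    (hcond : ∀ i, ¬∃ N : ℕ, a + fshift i - (-1 : ℂ) ^ pI i * lam i = N) :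
    IsHighestWeight Θ (lamTilde a r lam) (amono (hwMon m n) ⊗ₜ v) where
  ne_zero := amono_tmul_ne_zero _ hv.ne_zero
  raising _ _ := hΘ.raising_hwMon_tmul hv
  weight := hΘ.weight_hwMon_tmul hv
  eq_top_of_mem _ hN hvac := eq_top_of_tmulTransporter_homog_eq_top
    (hΘ.tmulTransporter_homog_eq_top hN hv (fun i k h => hcond i ⟨k, h⟩) hvac)

/-- Theorem 4.2.  If `a + f(i) − (−1)^{|i|}λ_i` is not a nonnegative integer
for every `i ∈ I`, then `F_a ⊗ L(λ)` is a highest weight module, generated by its highest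
weight vector `t_0^a ⊗ v_λ`. -/
theorem stmt6 (m n : ℕ) (a r : ℂ) (lam : Ind m n → ℂ) (HW : SimpleHW m n lam)
    (Θ : UEA (Ind (m+1) n) pI →ₐ[ℂ] Module.End ℂ (FaSp m n ⊗[ℂ] HW.L))
    (hΘ : IsTensorRep a r HW.ρ Θ)
    (hcond : ∀ i : Ind m n, ¬∃ N : ℕ,
      a + fshift i - ((-1 : ℂ) ^ (pI i)) * lam i = (N : ℂ)) :
    (∀ i j : Ind (m+1) n, iltI i j →
      Θ (gen pI i j) (amono (hwMon m n) ⊗ₜ[ℂ] HW.v) = 0) ∧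
    (∀ N : Submodule ℂ (FaSp m n ⊗[ℂ] HW.L),
      (∀ (u : UEA (Ind (m+1) n) pI), ∀ x ∈ N, Θ u x ∈ N) →
      amono (hwMon m n) ⊗ₜ[ℂ] HW.v ∈ N → N = ⊤) :=
  have h := stmt6_general HW.isHighestWeight hΘ hcond
  ⟨h.raising, h.eq_top_of_mem⟩
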